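/- arXiv:1003.3907 — 4 statements merged into one kernel-verified Lean document; each statement's English description precedes it below -/
import Mathlib

section
/- For every real t ≥ 1 and every real k with k ≥ 1 or 0 ≤ k ≤ 1/2, the inequality (t^{1−k} + 1)(t^k − 1) ≥ 2k(t − 1) holds. -/
/-!
Expanding the product, the claim becomes `(2 * k - 1) * (t - 1) ≤ t ^ k - t ^ (1 - k)`. Both
differences are of powers of `t` whose exponents are symmetric about `1 / 2`, so dividing by
`2 * t ^ (1 / 2)` turns it into `a * sinh x ≤ sinh (a * x)` with `a = 2 * k - 1` and
`x = log t / 2 ≥ 0`. As `sinh` is convex on `[0, ∞)` and vanishes at `0`, this holds for `1 ≤ a`,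
and the reverse inequality holds for `0 ≤ a ≤ 1`; oddness of `sinh` turns the latter into the case
`-1 ≤ a ≤ 0`.
-/

open Real Set

lemma convexOn_sinh_Ici : ConvexOn ℝ (Ici 0) sinh := by
  refine MonotoneOn.convexOn_of_deriv (convex_Ici 0) continuous_sinh.continuousOn
    differentiable_sinh.differentiableOn ?_
  rw [Real.deriv_sinh]
  exact cosh_strictMonoOn.monotoneOn.mono interior_subset

lemma sinh_mul_le_mul_sinh {a x : ℝ} (ha₀ : 0 ≤ a) (ha₁ : a ≤ 1) (hx : 0 ≤ x) :
    sinh (a * x) ≤ a * sinh x := by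
  simpa using convexOn_sinh_Ici.2 (mem_Ici.2 hx) self_mem_Ici ha₀ (sub_nonneg.2 ha₁)
    (add_sub_cancel a 1)

lemma mul_sinh_le_sinh_mul_of_one_le {a x : ℝ} (ha : 1 ≤ a) (hx : 0 ≤ x) :
    a * sinh x ≤ sinh (a * x) := by
  have ha₀ : 0 < a := one_pos.trans_le ha
  have h : sinh (a⁻¹ * (a * x)) ≤ a⁻¹ * sinh (a * x) :=
    sinh_mul_le_mul_sinh (inv_nonneg.2 ha₀.le) (inv_le_one_of_one_le₀ ha)
      (mul_nonneg ha₀.le hx)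
  rwa [inv_mul_cancel_left₀ ha₀.ne', le_inv_mul_iff₀ ha₀] at h

lemma mul_sinh_le_sinh_mul_of_nonpos {a x : ℝ} (ha₁ : -1 ≤ a) (ha₀ : a ≤ 0) (hx : 0 ≤ x) :
    a * sinh x ≤ sinh (a * x) := by
  have h : sinh (-a * x) ≤ -a * sinh x :=
    sinh_mul_le_mul_sinh (neg_nonneg.2 ha₀) (neg_le.1 ha₁) hx
  rwa [neg_mul, neg_mul, sinh_neg, neg_le_neg_iff] at h

lemma rpow_add_sub_rpow_sub {t : ℝ} (ht : 0 < t) (m d : ℝ) :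
    t ^ (m + d) - t ^ (m - d) = 2 * t ^ m * sinh (d * log t) := by
  rw [sub_eq_add_neg m, rpow_add ht, rpow_add ht, rpow_def_of_pos ht d, rpow_def_of_pos ht (-d),
    sinh_eq, mul_neg, mul_comm d]
  ring

lemma mul_rpow_add_sub_rpow_sub_le {t a d : ℝ} (ht : 1 ≤ t) (hd : 0 ≤ d)
    (ha : 1 ≤ a ∨ (-1 ≤ a ∧ a ≤ 0)) (m : ℝ) :
    a * (t ^ (m + d) - t ^ (m - d)) ≤ t ^ (m + a * d) - t ^ (m - a * d) := by
  have ht₀ : 0 < t := one_pos.trans_le ht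
  have hx : 0 ≤ d * log t := mul_nonneg hd (log_nonneg ht)
  have h_sinh : a * sinh (d * log t) ≤ sinh (a * (d * log t)) :=
    ha.elim (mul_sinh_le_sinh_mul_of_one_le · hx)
      fun ⟨ha₁, ha₀⟩ ↦ mul_sinh_le_sinh_mul_of_nonpos ha₁ ha₀ hx
  calc a * (t ^ (m + d) - t ^ (m - d))
    _ = 2 * t ^ m * (a * sinh (d * log t)) := by rw [rpow_add_sub_rpow_sub ht₀]; ring
    _ ≤ 2 * t ^ m * sinh (a * (d * log t)) := by gcongr
    _ = t ^ (m + a * d) - t ^ (m - a * d) := by rw [rpow_add_sub_rpow_sub ht₀, mul_assoc a]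

/-- For `t ≥ 1` and `k ≥ 1` or `0 ≤ k ≤ 1/2`, `(t^{1−k} + 1)(t^k − 1) ≥ 2k(t − 1)`. -/
theorem pow_ineq (t k : ℝ) (ht : 1 ≤ t) (hk : 1 ≤ k ∨ (0 ≤ k ∧ k ≤ 1/2)) :
    (t ^ (1 - k) + 1) * (t ^ k - 1) ≥ 2 * k * (t - 1) := by
  have ha : 1 ≤ 2 * k - 1 ∨ (-1 ≤ 2 * k - 1 ∧ 2 * k - 1 ≤ 0) :=
    hk.imp (fun _ ↦ by linarith) fun ⟨_, _⟩ ↦ ⟨by linarith, by linarith⟩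
  have h_diff : (2 * k - 1) * (t - 1) ≤ t ^ k - t ^ (1 - k) := by
    convert mul_rpow_add_sub_rpow_sub_le ht one_half_pos.le ha (1 / 2) using 3
    · norm_num
    · norm_num
    · ring
    · ring
  have h_prod : t ^ (1 - k) * t ^ k = t := by
    rw [← rpow_add (one_pos.trans_le ht), sub_add_cancel, rpow_one]
  calc 2 * k * (t - 1)
    _ = t - 1 + (2 * k - 1) * (t - 1) := by ring
    _ ≤ t - 1 + (t ^ k - t ^ (1 - k)) := by gcongr
    _ = t ^ (1 - k) * t ^ k - 1 + (t ^ k - t ^ (1 - k)) := by rw [h_prod]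
    _ = (t ^ (1 - k) + 1) * (t ^ k - 1) := by ring
end

section
/- For every real s ≥ 1 and every real p with 0 ≤ p ≤ 1, the inequality (1 − 2p)²(s − 1)² − (s^p − s^{1−p})² ≥ 0 holds; equivalently, (s^{2p} − 1)(s^{2(1−p)} − 1) ≥ 4p(1 − p)(s − 1)². -/
/-!
In terms of `t = log s / 2` and `q = 2 * p - 1`, one has `s - 1 = 2 * √s * sinh t` and
`s ^ p - s ^ (1 - p) = 2 * √s * sinh (q * t)`. Since `|q| ≤ 1`, the first inequality is
`|sinh (q * t)| ≤ |q| * |sinh t|`, which is the convexity of `sinh` on `[0, ∞)` together with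
`sinh 0 = 0`. The second inequality is a rearrangement of the first, because
`s ^ p * s ^ (1 - p) = s`.
-/

open Set

lemma convexOn_sinh : ConvexOn ℝ (Ici 0) Real.sinh := by
  refine MonotoneOn.convexOn_of_deriv (convex_Ici 0) Real.continuous_sinh.continuousOn
    Real.differentiable_sinh.differentiableOn ?_
  rw [Real.deriv_sinh]
  exact Real.cosh_strictMonoOn.monotoneOn.mono interior_subset

lemma sinh_mul_le_mul_sinh_s5 {q t : ℝ} (hq0 : 0 ≤ q) (hq1 : q ≤ 1) (ht : 0 ≤ t) :
    Real.sinh (q * t) ≤ q * Real.sinh t := by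
  simpa using convexOn_sinh.2 ht self_mem_Ici hq0 (sub_nonneg.2 hq1) (add_sub_cancel q 1)

lemma abs_sinh_mul_le {q : ℝ} (hq : |q| ≤ 1) (t : ℝ) :
    |Real.sinh (q * t)| ≤ |q| * |Real.sinh t| := by
  rw [Real.abs_sinh, Real.abs_sinh, abs_mul]
  exact sinh_mul_le_mul_sinh_s5 (abs_nonneg q) hq (abs_nonneg t)

lemma rpow_sub_rpow_eq_mul_sinh {s : ℝ} (hs : 0 < s) (a b : ℝ) :
    s ^ a - s ^ b = 2 * s ^ ((a + b) / 2) * Real.sinh ((a - b) * (Real.log s / 2)) := by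
  simp only [Real.rpow_def_of_pos hs, Real.sinh_eq]
  calc Real.exp (Real.log s * a) - Real.exp (Real.log s * b)
      = Real.exp (Real.log s * ((a + b) / 2) + (a - b) * (Real.log s / 2))
        - Real.exp (Real.log s * ((a + b) / 2) + -((a - b) * (Real.log s / 2))) := by ring_nf
    _ = _ := by rw [Real.exp_add, Real.exp_add]; ring

lemma abs_rpow_sub_rpow_one_sub_le {s p : ℝ} (hs : 0 < s) (hp0 : 0 ≤ p) (hp1 : p ≤ 1) :
    |s ^ p - s ^ (1 - p)| ≤ |1 - 2 * p| * |s - 1| := by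
  have hq : |p - (1 - p)| ≤ 1 := abs_le.2 ⟨by linarith, by linarith⟩
  have hs1 : s - 1 = 2 * s ^ (1 / 2 : ℝ) * Real.sinh (Real.log s / 2) := by
    simpa using rpow_sub_rpow_eq_mul_sinh hs 1 0
  calc |s ^ p - s ^ (1 - p)|
      = |2 * s ^ (1 / 2 : ℝ)| * |Real.sinh ((p - (1 - p)) * (Real.log s / 2))| := by
        rw [rpow_sub_rpow_eq_mul_sinh hs, add_sub_cancel, abs_mul]
    _ ≤ |2 * s ^ (1 / 2 : ℝ)| * (|p - (1 - p)| * |Real.sinh (Real.log s / 2)|) := by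
        gcongr
        exact abs_sinh_mul_le hq _
    _ = |p - (1 - p)| * |s - 1| := by
        rw [hs1, abs_mul (2 * s ^ (1 / 2 : ℝ)), mul_left_comm]
    _ = |1 - 2 * p| * |s - 1| := by
        rw [abs_sub_comm, sub_sub, ← two_mul]

lemma rpow_two_mul_sub_one_mul_rpow_two_mul_sub_one {s : ℝ} (hs : 0 < s) (a b : ℝ) :
    (s ^ (2 * a) - 1) * (s ^ (2 * b) - 1) = (s ^ (a + b) - 1) ^ 2 - (s ^ a - s ^ b) ^ 2 := by
  rw [two_mul, two_mul, Real.rpow_add hs, Real.rpow_add hs, Real.rpow_add hs]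
  ring

theorem lemma_Ya_WYD_general {s p : ℝ} (hs : 0 < s) (hp0 : 0 ≤ p) (hp1 : p ≤ 1) :
    (1 - 2 * p) ^ 2 * (s - 1) ^ 2 - (s ^ p - s ^ (1 - p)) ^ 2 ≥ 0 ∧
    (s ^ (2 * p) - 1) * (s ^ (2 * (1 - p)) - 1) ≥ 4 * p * (1 - p) * (s - 1) ^ 2 := by
  have hsq : (s ^ p - s ^ (1 - p)) ^ 2 ≤ (1 - 2 * p) ^ 2 * (s - 1) ^ 2 := by
    rw [← mul_pow, sq_le_sq, abs_mul]
    exact abs_rpow_sub_rpow_one_sub_le hs hp0 hp1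
  refine ⟨sub_nonneg.2 hsq, ?_⟩
  rw [rpow_two_mul_sub_one_mul_rpow_two_mul_sub_one hs, add_sub_cancel, Real.rpow_one]
  linarith

/-- For `s ≥ 1` and `0 ≤ p ≤ 1`, `(1 − 2p)²(s − 1)² − (s^p − s^{1−p})² ≥ 0`; equivalently
`(s^{2p} − 1)(s^{2(1−p)} − 1) ≥ 4p(1 − p)(s − 1)²`. -/
theorem lemma_Ya_WYD (s p : ℝ) (hs : 1 ≤ s) (hp0 : 0 ≤ p) (hp1 : p ≤ 1) :
    (1 - 2 * p) ^ 2 * (s - 1) ^ 2 - (s ^ p - s ^ (1 - p)) ^ 2 ≥ 0 ∧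
    (s ^ (2 * p) - 1) * (s ^ (2 * (1 - p)) - 1) ≥ 4 * p * (1 - p) * (s - 1) ^ 2 :=
  lemma_Ya_WYD_general (zero_lt_one.trans_le hs) hp0 hp1
end

section
/- Let λ, μ > 0 be real numbers and let α, β ≥ 0 satisfy α + β ≥ 1 or α + β ≤ 1/2. Then (λ + μ + f_{α+β}(λ,μ))² − (f_α(λ,μ) + f_β(λ,μ))² ≥ 16αβ(λ − μ)²; equivalently, {λ + μ + f_{α+β}(λ,μ) − f_α(λ,μ) − f_β(λ,μ)} · {λ + μ + f_{α+β}(λ,μ) + f_α(λ,μ) + f_β(λ,μ)} ≥ 16αβ(λ − μ)². -/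
/-! Write `λ = exp (u + t)` and `μ = exp (u - t)`. Then `f_a(λ, μ) = 2 eᵘ cosh ((2a - 1)t)`, and
`λ + μ = f_1(λ, μ)`, so one sum-to-product formula evaluates both sums that are squared. With
`s = α + β` and `d = α - β` the claim becomes
`(s² - d²) sinh² t ≤ cosh² ((s - 1)t) (sinh² (st) - sinh² (dt))`.

By convexity of `sinh` on the half-line, `sinh (at) / a` increases with `a ≥ 0`. Hence
`s² sinh² (dt) ≤ d² sinh² (st)` when `|d| ≤ |s|`, which reduces the claim to `d = 0`, that is, to
`|s sinh t| ≤ |cosh ((s - 1)t) sinh (st)|`. The product on the right is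
`(sinh ((2s - 1)t) + sinh t) / 2`, and the same monotonicity compares `sinh ((2s - 1)t)` with
`(2s - 1) sinh t`; the sign of the difference is the favourable one unless `1/2 < s < 1`. -/

/-- `f_α(x,y) = x^α y^{1−α} + x^{1−α} y^α`. -/
noncomputable def fWYD (a x y : ℝ) : ℝ := x ^ a * y ^ (1 - a) + x ^ (1 - a) * y ^ a

open Real

lemma sinh_add_add_sinh_sub (x y : ℝ) : sinh (x + y) + sinh (x - y) = 2 * sinh x * cosh y := by
  rw [sinh_add, sinh_sub]
  ring

lemma cosh_add_add_cosh_sub (x y : ℝ) : cosh (x + y) + cosh (x - y) = 2 * cosh x * cosh y := by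
  rw [cosh_add, cosh_sub]
  ring

lemma convexOn_sinh_s8 : ConvexOn ℝ (Set.Ici 0) sinh := by
  refine MonotoneOn.convexOn_of_deriv (convex_Ici 0) continuous_sinh.continuousOn
    differentiable_sinh.differentiableOn ?_
  rw [interior_Ici, Real.deriv_sinh]
  exact cosh_strictMonoOn.monotoneOn.mono Set.Ioi_subset_Ici_self

lemma mul_sinh_mul_le_mul_sinh_mul {a b t : ℝ} (ha : 0 ≤ a) (hab : a ≤ b) (ht : 0 ≤ t) :
    b * sinh (a * t) ≤ a * sinh (b * t) := by
  rcases (ha.trans hab).eq_or_lt with rfl | hb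
  · simp [hab.antisymm ha]
  have hconv : sinh (a / b * (b * t)) ≤ a / b * sinh (b * t) := by
    simpa using convexOn_sinh_s8.2 (Set.mem_Ici.2 (by positivity : 0 ≤ b * t)) Set.self_mem_Ici
      (div_nonneg ha hb.le) (sub_nonneg.2 ((div_le_one hb).2 hab)) (add_sub_cancel _ _)
  rwa [← mul_assoc, div_mul_cancel₀ a hb.ne', div_mul_eq_mul_div, le_div_iff₀' hb] at hconv

lemma abs_mul_sinh_mul_le_abs_mul_sinh_mul {a b : ℝ} (hab : |a| ≤ |b|) (t : ℝ) :
    |b * sinh (a * t)| ≤ |a * sinh (b * t)| := by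
  simpa only [abs_mul, abs_sinh] using
    mul_sinh_mul_le_mul_sinh_mul (abs_nonneg a) hab (abs_nonneg t)

lemma abs_mul_sinh_le_abs_cosh_mul_sinh {s : ℝ} (hs : 1 ≤ s ∨ s ≤ 1 / 2) (t : ℝ) :
    |s * sinh t| ≤ |cosh ((s - 1) * t) * sinh (s * t)| := by
  wlog ht : 0 ≤ t generalizing t
  · simpa using this (-t) (by linarith)
  have hsinh : 0 ≤ sinh t := sinh_nonneg_iff.2 ht
  have hprod : sinh ((2 * s - 1) * t) + sinh t = 2 * (cosh ((s - 1) * t) * sinh (s * t)) := by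
    convert sinh_add_add_sinh_sub (s * t) ((s - 1) * t) using 1 <;> ring_nf
  have hneg : sinh ((2 * s - 1) * t) = -sinh ((1 - 2 * s) * t) := by
    rw [← sinh_neg]
    ring_nf
  rcases le_total s 0 with hs₀ | hs₀
  · have hle : sinh ((2 * s - 1) * t) ≤ (2 * s - 1) * sinh t := by
      have hmono : (1 - 2 * s) * sinh t ≤ sinh ((1 - 2 * s) * t) := by
        simpa only [one_mul] using
          mul_sinh_mul_le_mul_sinh_mul zero_le_one (by linarith : 1 ≤ 1 - 2 * s) ht
      linarith
    exact abs_le_abs_of_nonpos (mul_nonpos_of_nonpos_of_nonneg hs₀ hsinh) (by linarith)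
  · have hle : (2 * s - 1) * sinh t ≤ sinh ((2 * s - 1) * t) := by
      rcases hs with hs | hs
      · simpa only [one_mul] using
          mul_sinh_mul_le_mul_sinh_mul zero_le_one (by linarith : 1 ≤ 2 * s - 1) ht
      · have hmono : sinh ((1 - 2 * s) * t) ≤ (1 - 2 * s) * sinh t := by
          simpa only [one_mul] using
            mul_sinh_mul_le_mul_sinh_mul (by linarith) (by linarith : 1 - 2 * s ≤ 1) ht
        linarith
    exact abs_le_abs_of_nonneg (mul_nonneg hs₀ hsinh) (by linarith)

lemma sq_sub_sq_mul_sinh_sq_le {s d : ℝ} (hd : |d| ≤ |s|) (hs : 1 ≤ s ∨ s ≤ 1 / 2) (t : ℝ) :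
    (s ^ 2 - d ^ 2) * sinh t ^ 2 ≤
      cosh ((s - 1) * t) ^ 2 * (sinh (s * t) ^ 2 - sinh (d * t) ^ 2) := by
  rcases eq_or_ne s 0 with rfl | hs₀
  · obtain rfl : d = 0 := by simpa using hd
    simp
  have hsd : 0 ≤ s ^ 2 - d ^ 2 := sub_nonneg.2 (sq_le_sq.2 hd)
  have hzero := sq_le_sq.2 (abs_mul_sinh_le_abs_cosh_mul_sinh hs t)
  have hscale := sq_le_sq.2 (abs_mul_sinh_mul_le_abs_mul_sinh_mul hd t)
  refine le_of_mul_le_mul_left ?_ (sq_pos_of_ne_zero hs₀)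
  calc s ^ 2 * ((s ^ 2 - d ^ 2) * sinh t ^ 2)
      = (s ^ 2 - d ^ 2) * (s * sinh t) ^ 2 := by ring
    _ ≤ (s ^ 2 - d ^ 2) * (cosh ((s - 1) * t) * sinh (s * t)) ^ 2 := by gcongr
    _ = cosh ((s - 1) * t) ^ 2 * (s ^ 2 * sinh (s * t) ^ 2 - (d * sinh (s * t)) ^ 2) := by ring
    _ ≤ cosh ((s - 1) * t) ^ 2 * (s ^ 2 * sinh (s * t) ^ 2 - (s * sinh (d * t)) ^ 2) := by gcongr
    _ = s ^ 2 * (cosh ((s - 1) * t) ^ 2 * (sinh (s * t) ^ 2 - sinh (d * t) ^ 2)) := by ring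

lemma exists_eq_exp_add_eq_exp_sub {x y : ℝ} (hx : 0 < x) (hy : 0 < y) :
    ∃ u t : ℝ, x = exp (u + t) ∧ y = exp (u - t) := by
  refine ⟨(log x + log y) / 2, (log x - log y) / 2, ?_, ?_⟩
  · rw [← add_div, add_add_sub_cancel, add_self_div_two, exp_log hx]
  · rw [← sub_div, add_sub_sub_cancel, add_self_div_two, exp_log hy]

lemma exp_add_sub_exp_sub (u t : ℝ) : exp (u + t) - exp (u - t) = 2 * exp u * sinh t := by
  rw [sub_eq_add_neg u, exp_add, exp_add, sinh_eq]
  ring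

lemma fWYD_one (x y : ℝ) : fWYD 1 x y = x + y := by
  simp [fWYD]

lemma fWYD_exp_add_exp_sub (a u t : ℝ) :
    fWYD a (exp (u + t)) (exp (u - t)) = 2 * exp u * cosh ((2 * a - 1) * t) := by
  calc fWYD a (exp (u + t)) (exp (u - t))
      = exp (u + (2 * a - 1) * t) + exp (u - (2 * a - 1) * t) := by
        simp only [fWYD, ← exp_mul, ← exp_add]
        ring_nf
    _ = 2 * exp u * cosh ((2 * a - 1) * t) := by
        rw [sub_eq_add_neg u, exp_add, exp_add, cosh_eq]
        ring

lemma fWYD_add_fWYD_exp_add_exp_sub (a b u t : ℝ) :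
    fWYD a (exp (u + t)) (exp (u - t)) + fWYD b (exp (u + t)) (exp (u - t)) =
      4 * exp u * (cosh ((a + b - 1) * t) * cosh ((a - b) * t)) := by
  have hsum : cosh ((2 * a - 1) * t) + cosh ((2 * b - 1) * t) =
      2 * cosh ((a + b - 1) * t) * cosh ((a - b) * t) := by
    rw [← cosh_add_add_cosh_sub]
    ring_nf
  rw [fWYD_exp_add_exp_sub, fWYD_exp_add_exp_sub]
  linear_combination 2 * exp u * hsum

theorem f_ineq_general (lam mu α β : ℝ) (hlam : 0 < lam) (hmu : 0 < mu)
    (hαβ : 0 ≤ α * β) (hcond : 1 ≤ α + β ∨ α + β ≤ 1 / 2) :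
    (lam + mu + fWYD (α + β) lam mu) ^ 2 - (fWYD α lam mu + fWYD β lam mu) ^ 2 ≥
      16 * α * β * (lam - mu) ^ 2 ∧
    (lam + mu + fWYD (α + β) lam mu - fWYD α lam mu - fWYD β lam mu) *
      (lam + mu + fWYD (α + β) lam mu + fWYD α lam mu + fWYD β lam mu) ≥
        16 * α * β * (lam - mu) ^ 2 := by
  suffices h : 16 * α * β * (lam - mu) ^ 2 ≤
      (lam + mu + fWYD (α + β) lam mu) ^ 2 - (fWYD α lam mu + fWYD β lam mu) ^ 2 from
    ⟨h, by linarith⟩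
  have hd : |α - β| ≤ |α + β| := sq_le_sq.1 (by linarith)
  rw [add_comm (lam + mu), ← fWYD_one lam mu]
  obtain ⟨u, t, rfl, rfl⟩ := exists_eq_exp_add_eq_exp_sub hlam hmu
  rw [fWYD_add_fWYD_exp_add_exp_sub, fWYD_add_fWYD_exp_add_exp_sub, exp_add_sub_exp_sub,
    add_sub_cancel_right]
  calc 16 * α * β * (2 * exp u * sinh t) ^ 2
      = 16 * exp u ^ 2 * (((α + β) ^ 2 - (α - β) ^ 2) * sinh t ^ 2) := by ring
    _ ≤ 16 * exp u ^ 2 * (cosh ((α + β - 1) * t) ^ 2 *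
          (sinh ((α + β) * t) ^ 2 - sinh ((α - β) * t) ^ 2)) :=
        mul_le_mul_of_nonneg_left (sq_sub_sq_mul_sinh_sq_le hd hcond t) (by positivity)
    _ = _ := by
        rw [sinh_sq, sinh_sq]
        ring

/-- For `λ, μ > 0` and `α, β ≥ 0` with `α + β ≥ 1` or `α + β ≤ 1/2`,
`(λ + μ + f_{α+β}(λ,μ))² − (f_α(λ,μ) + f_β(λ,μ))² ≥ 16αβ(λ − μ)²`; equivalently for the
factored form. -/
theorem f_ineq (lam mu α β : ℝ) (hlam : 0 < lam) (hmu : 0 < mu)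
    (hα : 0 ≤ α) (hβ : 0 ≤ β) (hcond : 1 ≤ α + β ∨ α + β ≤ 1/2) :
    (lam + mu + fWYD (α + β) lam mu) ^ 2 - (fWYD α lam mu + fWYD β lam mu) ^ 2 ≥
      16 * α * β * (lam - mu) ^ 2 ∧
    (lam + mu + fWYD (α + β) lam mu - fWYD α lam mu - fWYD β lam mu) *
      (lam + mu + fWYD (α + β) lam mu + fWYD α lam mu + fWYD β lam mu) ≥
        16 * α * β * (lam - mu) ^ 2 :=
  f_ineq_general lam mu α β hlam hmu (mul_nonneg hα hβ) hcond
end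

section
/- Let ρ be an invertible density matrix on ℂⁿ, let H be an n×n Hermitian matrix, and let α, β ≥ 0 satisfy α + β ≥ 1 or α + β ≤ 1/2. Then I_{ρ,α,β}(H) ≥ 0. -/
/-!
Let `G` be the matrix of `H₀` in an eigenbasis of `ρ` with eigenvalues `x i`. Then
`Tr[ρ^s H₀ ρ^t H₀] = ∑ i j, x i ^ s * x j ^ t * ‖G i j‖²`, so the four traces of `2 I_{ρ,α,β}(H)`
combine into the sum of `‖G i j‖²` against the weights
`x j + x i ^ (α+β) x j ^ (1-α-β) - x i ^ α x j ^ (1-α) - x i ^ β x j ^ (1-β)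
  = (x i ^ α - x j ^ α) (x i ^ β - x j ^ β) x j ^ (1-α-β)`.
When `α` and `β` have the same sign, `x ↦ x ^ α` and `x ↦ x ^ β` are monotone in the same direction
on `(0, ∞)`, so every weight is nonnegative.
-/

open Matrix ComplexOrder

/-- Real power of a positive definite matrix via functional calculus
(eigendecomposition). -/
noncomputable def matRpow {n : ℕ} {ρ : Matrix (Fin n) (Fin n) ℂ} (hρ : ρ.PosDef) (s : ℝ) :
    Matrix (Fin n) (Fin n) ℂ :=
  (hρ.1.eigenvectorUnitary : Matrix (Fin n) (Fin n) ℂ) *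
    Matrix.diagonal (fun i => ((hρ.1.eigenvalues i ^ s : ℝ) : ℂ)) *
    (star (hρ.1.eigenvectorUnitary : Matrix (Fin n) (Fin n) ℂ))

/-- `H₀ = H - Tr[ρH]·I`. -/
noncomputable def H0 {n : ℕ} (ρ H : Matrix (Fin n) (Fin n) ℂ) : Matrix (Fin n) (Fin n) ℂ :=
  H - (Matrix.trace (ρ * H)) • (1 : Matrix (Fin n) (Fin n) ℂ)

/-- Generalized Wigner–Yanase–Dyson skew information `I_{ρ,α,β}(H)`. -/
noncomputable def wydI {n : ℕ} {ρ : Matrix (Fin n) (Fin n) ℂ} (hρ : ρ.PosDef) (α β : ℝ)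
    (H : Matrix (Fin n) (Fin n) ℂ) : ℝ :=
  (1/2) * (Matrix.trace (ρ * H0 ρ H * H0 ρ H)
    + Matrix.trace (matRpow hρ (α+β) * H0 ρ H * matRpow hρ (1-α-β) * H0 ρ H)
    - Matrix.trace (matRpow hρ α * H0 ρ H * matRpow hρ (1-α) * H0 ρ H)
    - Matrix.trace (matRpow hρ β * H0 ρ H * matRpow hρ (1-β) * H0 ρ H)).re

/-- `J_{ρ,α,β}(H)`. -/
noncomputable def wydJ {n : ℕ} {ρ : Matrix (Fin n) (Fin n) ℂ} (hρ : ρ.PosDef) (α β : ℝ)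
    (H : Matrix (Fin n) (Fin n) ℂ) : ℝ :=
  (1/2) * (Matrix.trace (ρ * H0 ρ H * H0 ρ H)
    + Matrix.trace (matRpow hρ (α+β) * H0 ρ H * matRpow hρ (1-α-β) * H0 ρ H)
    + Matrix.trace (matRpow hρ α * H0 ρ H * matRpow hρ (1-α) * H0 ρ H)
    + Matrix.trace (matRpow hρ β * H0 ρ H * matRpow hρ (1-β) * H0 ρ H)).re

/-- `U_{ρ,α,β}(H) = √(I_{ρ,α,β}(H)·J_{ρ,α,β}(H))`. -/
noncomputable def wydU {n : ℕ} {ρ : Matrix (Fin n) (Fin n) ℂ} (hρ : ρ.PosDef) (α β : ℝ)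
    (H : Matrix (Fin n) (Fin n) ℂ) : ℝ :=
  Real.sqrt (wydI hρ α β H * wydJ hρ α β H)

section Rpow

variable {x y α β : ℝ}

lemma monovaryOn_rpow_rpow_Ioi (hαβ : 0 ≤ α * β) :
    MonovaryOn (fun x : ℝ ↦ x ^ α) (fun x ↦ x ^ β) (Set.Ioi 0) := by
  rcases mul_nonneg_iff.mp hαβ with ⟨hα, hβ⟩ | ⟨hα, hβ⟩
  · exact ((Real.monotoneOn_rpow_Ici_of_exponent_nonneg hα).monovaryOn
      (Real.monotoneOn_rpow_Ici_of_exponent_nonneg hβ)).subset Set.Ioi_subset_Ici_self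
  · exact (Real.antitoneOn_rpow_Ioi_of_exponent_nonpos hα).monovaryOn
      (Real.antitoneOn_rpow_Ioi_of_exponent_nonpos hβ)

lemma rpow_sub_rpow_mul_rpow_sub_rpow_nonneg (hx : 0 < x) (hy : 0 < y) (hαβ : 0 ≤ α * β) :
    0 ≤ (x ^ α - y ^ α) * (x ^ β - y ^ β) :=
  (monovaryOn_rpow_rpow_Ioi hαβ).sub_mul_sub_nonneg hy hx

lemma rpow_sub_rpow_mul_rpow_sub_rpow_mul_rpow (hx : 0 < x) (hy : 0 < y) (α β : ℝ) :
    (x ^ α - y ^ α) * (x ^ β - y ^ β) * y ^ (1 - α - β) =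
      y + x ^ (α + β) * y ^ (1 - α - β) - x ^ α * y ^ (1 - α) - x ^ β * y ^ (1 - β) := by
  have hyα : y ^ (1 - α) = y ^ β * y ^ (1 - α - β) := by
    rw [← Real.rpow_add hy]; ring_nf
  have hyβ : y ^ (1 - β) = y ^ α * y ^ (1 - α - β) := by
    rw [← Real.rpow_add hy]; ring_nf
  have hy_one : y = y ^ α * y ^ (1 - α) := by
    rw [← Real.rpow_add hy, add_sub_cancel, Real.rpow_one]
  rw [Real.rpow_add hx]
  linear_combination -hy_one + (x ^ α - y ^ α) * hyα + x ^ β * hyβ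

end Rpow

section Eigenbasis

variable {ι 𝕜 : Type*} [Fintype ι] [DecidableEq ι] [RCLike 𝕜] {A K G : Matrix ι ι 𝕜}

lemma trace_diagonal_mul_mul_diagonal_mul (d e : ι → 𝕜) (hG : G.IsHermitian) :
    trace (diagonal d * G * diagonal e * G) = ∑ i, ∑ j, d i * e j * (‖G i j‖ : 𝕜) ^ 2 := by
  simp only [trace, diag_apply, Matrix.mul_assoc, diagonal_mul, mul_apply (M := G), Finset.mul_sum]
  refine Finset.sum_congr rfl fun i _ ↦ Finset.sum_congr rfl fun j _ ↦ ?_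
  rw [← RCLike.mul_conj, starRingEnd_apply, hG.apply j i]
  ring

/-- The matrix, in the orthonormal eigenbasis chosen by `hA`, of the operator whose matrix in the
standard basis is `K`; it turns traces of products of `K` with functions of `A` into sums over pairs
of eigenvalues of `A`. -/
noncomputable def eigenbasisMatrix (hA : A.IsHermitian) (K : Matrix ι ι 𝕜) : Matrix ι ι 𝕜 :=
  star (hA.eigenvectorUnitary : Matrix ι ι 𝕜) * K * (hA.eigenvectorUnitary : Matrix ι ι 𝕜)

lemma isHermitian_eigenbasisMatrix (hA : A.IsHermitian) (hK : K.IsHermitian) :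
    (eigenbasisMatrix hA K).IsHermitian :=
  isHermitian_conjTranspose_mul_mul _ hK

lemma trace_conj_diagonal_mul_mul_conj_diagonal_mul (hA : A.IsHermitian) (hK : K.IsHermitian)
    (d e : ι → 𝕜) :
    trace (Unitary.conjStarAlgAut 𝕜 _ hA.eigenvectorUnitary (diagonal d) * K *
        Unitary.conjStarAlgAut 𝕜 _ hA.eigenvectorUnitary (diagonal e) * K) =
      ∑ i, ∑ j, d i * e j * (‖eigenbasisMatrix hA K i j‖ : 𝕜) ^ 2 := by
  have trace_conj (U D E : Matrix ι ι 𝕜) :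
      trace (U * D * star U * K * (U * E * star U) * K) =
        trace (D * (star U * K * U) * E * (star U * K * U)) := by
    simp only [Matrix.mul_assoc, trace_mul_comm U]
  rw [Unitary.conjStarAlgAut_apply, Unitary.conjStarAlgAut_apply, trace_conj]
  exact trace_diagonal_mul_mul_diagonal_mul d e (isHermitian_eigenbasisMatrix hA hK)

lemma trace_mul_mul_self (hA : A.IsHermitian) (hK : K.IsHermitian) :
    trace (A * K * K) =
      ((∑ i, ∑ j, hA.eigenvalues j * ‖eigenbasisMatrix hA K i j‖ ^ 2 : ℝ) : 𝕜) := by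
  have h := trace_conj_diagonal_mul_mul_conj_diagonal_mul hA hK 1 (RCLike.ofReal ∘ hA.eigenvalues)
  rw [← hA.spectral_theorem, diagonal_one', map_one, one_mul] at h
  rw [trace_mul_cycle, h]
  simp

end Eigenbasis

section SkewInformation

variable {n : ℕ} {ρ H K : Matrix (Fin n) (Fin n) ℂ}

lemma isHermitian_H0 (hρ : ρ.IsHermitian) (hH : H.IsHermitian) : (H0 ρ H).IsHermitian := by
  have htrace : IsSelfAdjoint (trace (ρ * H)) := by
    rw [IsSelfAdjoint, ← trace_conjTranspose, conjTranspose_mul, hρ.eq, hH.eq, trace_mul_comm]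
  exact hH.sub (htrace.smul isHermitian_one)

lemma trace_matRpow_mul_mul_matRpow_mul (hρ : ρ.PosDef) (s t : ℝ) (hK : K.IsHermitian) :
    trace (matRpow hρ s * K * matRpow hρ t * K) =
      ((∑ i, ∑ j, hρ.1.eigenvalues i ^ s * hρ.1.eigenvalues j ^ t *
        ‖eigenbasisMatrix hρ.1 K i j‖ ^ 2 : ℝ) : ℂ) := by
  push_cast
  exact trace_conj_diagonal_mul_mul_conj_diagonal_mul hρ.1 hK _ _

lemma wydI_eq_sum (hρ : ρ.PosDef) (hH : H.IsHermitian) (α β : ℝ) :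
    wydI hρ α β H = 1 / 2 * ∑ i, ∑ j,
      (hρ.1.eigenvalues i ^ α - hρ.1.eigenvalues j ^ α) *
        (hρ.1.eigenvalues i ^ β - hρ.1.eigenvalues j ^ β) *
        hρ.1.eigenvalues j ^ (1 - α - β) * ‖eigenbasisMatrix hρ.1 (H0 ρ H) i j‖ ^ 2 := by
  have hH0 := isHermitian_H0 hρ.1 hH
  simp only [wydI, trace_mul_mul_self hρ.1 hH0, trace_matRpow_mul_mul_matRpow_mul hρ _ _ hH0,
    RCLike.ofReal_eq_complex_ofReal, Complex.sub_re, Complex.add_re, Complex.ofReal_re,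
    rpow_sub_rpow_mul_rpow_sub_rpow_mul_rpow (hρ.eigenvalues_pos _) (hρ.eigenvalues_pos _),
    ← Finset.sum_add_distrib, ← Finset.sum_sub_distrib, ← add_mul, ← sub_mul]

theorem wydI_nonneg_general (hρ : ρ.PosDef) (hH : H.IsHermitian) {α β : ℝ} (hαβ : 0 ≤ α * β) :
    0 ≤ wydI hρ α β H := by
  rw [wydI_eq_sum hρ hH]
  refine mul_nonneg one_half_pos.le (Finset.sum_nonneg fun i _ ↦ Finset.sum_nonneg fun j _ ↦ ?_)
  have hi := hρ.eigenvalues_pos i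
  have hj := hρ.eigenvalues_pos j
  have hdiff := rpow_sub_rpow_mul_rpow_sub_rpow_nonneg hi hj hαβ
  exact mul_nonneg (mul_nonneg hdiff (Real.rpow_nonneg hj.le _)) (sq_nonneg _)

end SkewInformation

/-- Nonnegativity of the generalized WYD skew information `I_{ρ,α,β}(H) ≥ 0`
for `α + β ≥ 1` or `α + β ≤ 1/2`. -/
theorem wydI_nonneg {n : ℕ} (ρ H : Matrix (Fin n) (Fin n) ℂ) (hρ : ρ.PosDef)
    (hρtr : Matrix.trace ρ = 1) (hH : H.IsHermitian)
    (α β : ℝ) (hα : 0 ≤ α) (hβ : 0 ≤ β) (hcond : 1 ≤ α + β ∨ α + β ≤ 1/2) :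
    0 ≤ wydI hρ α β H :=
  wydI_nonneg_general hρ hH (mul_nonneg hα hβ)
end
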